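/- Let k ≥ 2, n ≥ k+1, n > 5, and suppose L_n^{(k)} = a·(10^{d1}−1)/9 + (b−a)·10^{d2} with integers 0 ≤ d2 < d1, d1 ≥ 3, 1 ≤ a ≤ 9 and 0 ≤ b ≤ 9. Then |α^{−(n−1)}·10^{d1}·f_k(α)^{−1}·(2α−1)^{−1}·((a/9) + (b−a)·10^{d2−d1}) − 1| ≤ 5/(2·α^{n−1}), where α is the dominant root of Ψ_k and f_k(x) = (x−1)/(2 + (k+1)(x−2)). -/

import Mathlib

/-- Shifted `k`-generalized Lucas sequence: `genLucas k m` equals `L^{(k)}_{m - (k-2)}`,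
so that index `m = 0` corresponds to `n = 2 - k`.  The initial values are
`L^{(k)}_{2-k} = ⋯ = L^{(k)}_{-1} = 0`, `L^{(k)}_0 = 2`, `L^{(k)}_1 = 1`, and each term
afterwards is the sum of the `k` preceding terms. -/
def genLucas (k : ℕ) : ℕ → ℤ := fun m =>
  if h1 : m < k - 2 then 0
  else if h2 : m = k - 2 then 2
  else if h3 : m = k - 1 then 1
  else ∑ i ∈ Finset.range k, genLucas k (m - 1 - i)
decreasing_by omega

/-- The `k`-generalized Lucas number `L^{(k)}_n` for `n ≥ 0`. -/
def lucasL (k n : ℕ) : ℤ := genLucas k (n + k - 2)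

/-! The error `e` of the Binet approximation of the `k`-generalized Lucas numbers satisfies the
recurrence with characteristic polynomial `Ψ_k`. Removing the component along `α ^ m` lets one
divide `Ψ_k` by `x - α`, and the quotient multiplied by `x - 1` is, by `(2 - α) α ^ k = 1`,
the polynomial `x ^ k - ∑ i < k, α ^ (-(i + 1)) x ^ i`. Since `∑ i < k, α ^ (-(i + 1)) = 1`, each
`e (m + k)` is thus a weighted average of the `k` preceding errors, so all errors are bounded by the
initial ones, which are at most `3 / 2`. If the base-`g` digits of `L_n` are `a ⋯ a b ⋯ b`, the
linear form is the relative error of `L_n + a / (g - 1)` as an approximation of the dominant term,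
and `a / (g - 1) ≤ 1` accounts for the step from `3 / 2` to `5 / 2`. -/

open Finset

section LinearRecurrences

theorem norm_le_of_isSolution {R : Type*} [SeminormedCommRing R] {E : LinearRecurrence R}
    (hE : ∑ i, ‖E.coeffs i‖ ≤ 1) {u : ℕ → R} (hu : E.IsSolution u) {B : ℝ} (hB : 0 ≤ B)
    (hinit : ∀ m < E.order, ‖u m‖ ≤ B) (m : ℕ) : ‖u m‖ ≤ B := by
  induction m using Nat.strong_induction_on with
  | _ m ih =>
    rcases lt_or_ge m E.order with hm | hm
    · exact hinit m hm
    obtain ⟨j, rfl⟩ := Nat.exists_eq_add_of_le' hm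
    calc ‖u (j + E.order)‖ ≤ ∑ i, ‖E.coeffs i * u (j + i)‖ := by
          rw [hu j]
          exact norm_sum_le _ _
      _ ≤ ∑ i, ‖E.coeffs i‖ * B := by
          gcongr with i
          exact (norm_mul_le _ _).trans (by gcongr; exact ih _ (by omega))
      _ ≤ B := by
          rw [← sum_mul]
          exact mul_le_of_le_one_left hB hE

/-- The recurrence with characteristic polynomial `Ψ_k = x ^ k - x ^ (k - 1) - ⋯ - 1`. -/
def kBonacci (R : Type*) [CommSemiring R] (k : ℕ) : LinearRecurrence R := ⟨k, fun _ ↦ 1⟩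

theorem isSolution_kBonacci_iff {R : Type*} [CommSemiring R] {k : ℕ} {u : ℕ → R} :
    (kBonacci R k).IsSolution u ↔ ∀ m, u (m + k) = ∑ i ∈ range k, u (m + i) :=
  forall_congr' fun m ↦ by
    rw [sum_range]
    simp only [kBonacci, one_mul]
    rfl

theorem add_succ_eq_two_mul_sub_of_isSolution_kBonacci {R : Type*} [CommRing R] {k : ℕ}
    {u : ℕ → R} (hu : (kBonacci R k).IsSolution u) (m : ℕ) :
    u (m + k + 1) = 2 * u (m + k) - u m := by
  rw [isSolution_kBonacci_iff] at hu
  have hnext : u (m + k + 1) = ∑ i ∈ range k, u (m + (i + 1)) := by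
    simpa only [add_right_comm, add_assoc] using hu (m + 1)
  have hshift := sum_range_succ (fun i ↦ u (m + i)) k
  rw [sum_range_succ', add_zero, ← hu, ← hnext] at hshift
  linear_combination hshift

/-- The recurrence expressing each term as the combination of the `k` preceding ones with weights
`α⁻¹, …, α⁻ᵏ`, the oldest term having the largest weight. When `α` is a root of `Ψ_k`, the weights
add up to `1` and the characteristic polynomial is `(x - 1) Ψ_k(x) / (x - α)`. -/
def averaging {K : Type*} [Field K] (k : ℕ) (α : K) : LinearRecurrence K :=
  ⟨k, fun i ↦ α⁻¹ ^ ((i : ℕ) + 1)⟩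

-- The deviation of `u` from the averaging recurrence is multiplied by `α` at each step,
-- so it vanishes as soon as it does so at `0`.
theorem isSolution_averaging {K : Type*} [Field K] {k : ℕ} {α : K} (hα : α ≠ 0)
    (hpow : (2 - α) * α ^ k = 1) {u : ℕ → K} (hu : ∀ m, u (m + k + 1) = 2 * u (m + k) - u m)
    (hinit : u k = ∑ i ∈ range k, α⁻¹ ^ (i + 1) * u i) : (averaging k α).IsSolution u := by
  have havg (m : ℕ) : u (m + k) = ∑ i ∈ range k, α⁻¹ ^ (i + 1) * u (m + i) := by
    induction m with
    | zero => simpa only [zero_add] using hinit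
    | succ m ih =>
      have hinv : α⁻¹ ^ k = 2 - α := by rw [inv_pow, ← eq_inv_of_mul_eq_one_left hpow]
      have hscale : ∑ i ∈ range k, α⁻¹ ^ (i + 1) * u (m + 1 + i)
          = α * ∑ i ∈ range k, α⁻¹ ^ (i + 1 + 1) * u (m + (i + 1)) := by
        rw [mul_sum]
        refine sum_congr rfl fun i _ ↦ ?_
        rw [pow_succ' _ (i + 1), ← mul_assoc, mul_inv_cancel_left₀ hα, add_assoc m, add_comm 1]
      have hshift := sum_range_succ (fun i ↦ α⁻¹ ^ (i + 1) * u (m + i)) k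
      rw [sum_range_succ', ← ih, pow_succ' _ k, hinv, zero_add, pow_one, add_zero] at hshift
      rw [hscale, eq_sub_of_add_eq hshift, add_right_comm, hu]
      field_simp
      ring
  exact fun m ↦ (havg m).trans (sum_range _)

end LinearRecurrences

section DominantRoot

theorem isSolution_kBonacci_pow {R : Type*} [CommSemiring R] {k : ℕ} {α : R}
    (hroot : α ^ k = ∑ i ∈ range k, α ^ i) : (kBonacci R k).IsSolution (α ^ ·) :=
  isSolution_kBonacci_iff.2 fun m ↦ by simp only [pow_add, hroot, mul_sum]

theorem two_sub_mul_pow_eq_one {R : Type*} [CommRing R] {k : ℕ} {α : R}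
    (hroot : α ^ k = ∑ i ∈ range k, α ^ i) : (2 - α) * α ^ k = 1 := by
  have hgeom := geom_sum_mul α k
  rw [← hroot] at hgeom
  linear_combination -hgeom

theorem sum_inv_pow_succ_eq_one {K : Type*} [Field K] {k : ℕ} {α : K} (hα : α ≠ 0)
    (hroot : α ^ k = ∑ i ∈ range k, α ^ i) : ∑ i ∈ range k, α⁻¹ ^ (i + 1) = 1 := by
  have hreflect : ∀ i ∈ range k, α⁻¹ ^ (i + 1) = α ^ (k - 1 - i) / α ^ k := fun i hi ↦ by
    rw [eq_div_iff (pow_ne_zero k hα), inv_pow, inv_mul_eq_iff_eq_mul₀ (pow_ne_zero _ hα),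
      ← pow_add]
    congr 1
    have := mem_range.1 hi
    omega
  rw [sum_congr rfl hreflect, ← sum_div, sum_range_reflect (fun i ↦ α ^ i), ← hroot,
    div_self (pow_ne_zero k hα)]

variable {k : ℕ} {α : ℝ}

theorem root_lt_two (hα : 0 < α) (hroot : α ^ k = ∑ i ∈ range k, α ^ i) : α < 2 := by
  have hpos : 0 < (2 - α) * α ^ k := two_sub_mul_pow_eq_one hroot ▸ one_pos
  exact sub_pos.1 (pos_of_mul_pos_left hpos (by positivity))

theorem root_add_one_le_sq (hk : 2 ≤ k) (hα : 0 < α) (hroot : α ^ k = ∑ i ∈ range k, α ^ i) :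
    α + 1 ≤ α ^ 2 := by
  obtain ⟨j, rfl⟩ := Nat.exists_eq_add_of_le' hk
  have hle : α ^ j * (α + 1) ≤ α ^ j * α ^ 2 := by
    have hrest : 0 ≤ ∑ i ∈ range j, α ^ i := by positivity
    rw [← pow_add, hroot, sum_range_succ, sum_range_succ, pow_succ]
    linarith
  exact le_of_mul_le_mul_left hle (by positivity)

theorem three_halves_le_of_add_one_le_sq (hα : 0 ≤ α) (hsq : α + 1 ≤ α ^ 2) : 3 / 2 ≤ α := by
  nlinarith

theorem three_halves_le_root (hk : 2 ≤ k) (hα : 0 < α) (hroot : α ^ k = ∑ i ∈ range k, α ^ i) :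
    3 / 2 ≤ α :=
  three_halves_le_of_add_one_le_sq hα.le (root_add_one_le_sq hk hα hroot)

theorem three_mul_sub_one_le_two_mul_pow (hα : 0 ≤ α) (hsq : α + 1 ≤ α ^ 2) (hk : 2 ≤ k) :
    3 * (k : ℝ) - 1 ≤ 2 * α ^ k := by
  have hα' := three_halves_le_of_add_one_le_sq hα hsq
  induction k, hk using Nat.le_induction with
  | base => norm_num; linarith
  | succ j hj ih =>
    have hstep : 3 / 2 ≤ α ^ j * (α - 1) := calc
      3 / 2 ≤ α * 1 := by linarith
      _ ≤ α * (α * (α - 1)) := by gcongr; linarith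
      _ = α ^ 2 * (α - 1) := by ring
      _ ≤ α ^ j * (α - 1) := by gcongr <;> linarith
    push_cast
    linarith [pow_succ α j]

theorem three_mul_sub_one_mul_two_sub_le (hk : 2 ≤ k) (hα : 0 < α)
    (hroot : α ^ k = ∑ i ∈ range k, α ^ i) : (3 * (k : ℝ) - 1) * (2 - α) ≤ 2 := by
  have hsq := root_add_one_le_sq hk hα hroot
  have hβ : 0 ≤ 2 - α := by linarith [root_lt_two hα hroot]
  calc (3 * (k : ℝ) - 1) * (2 - α) ≤ 2 * α ^ k * (2 - α) := by
        gcongr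
        exact three_mul_sub_one_le_two_mul_pow hα.le hsq hk
    _ = 2 := by linear_combination 2 * two_sub_mul_pow_eq_one hroot

theorem two_sub_mul_pow_succ_le (hα : 0 < α) (hroot : α ^ k = ∑ i ∈ range k, α ^ i) {m : ℕ}
    (hm : m + 2 < k) : (2 - α) * α ^ (m + 1) ≤ 4 / 9 := by
  have hα' := three_halves_le_root (by omega) hα hroot
  have hβ : 0 ≤ 2 - α := by linarith [root_lt_two hα hroot]
  rw [← one_div_div, le_div_iff₀ (by norm_num)]
  calc (2 - α) * α ^ (m + 1) * (9 / 4) = (2 - α) * (α ^ (m + 1) * (3 / 2) ^ 2) := by ring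
    _ ≤ (2 - α) * (α ^ (m + 1) * α ^ 2) := by gcongr
    _ = (2 - α) * α ^ (m + 3) := by ring
    _ ≤ (2 - α) * α ^ k := by
      gcongr
      · linarith
      · omega
    _ = 1 := two_sub_mul_pow_eq_one hroot

/-- The function `f_k` of the Binet-type formulas for `k`-generalized sequences. -/
noncomputable def binetWeight (k : ℕ) (x : ℝ) : ℝ := (x - 1) / (2 + ((k : ℝ) + 1) * (x - 2))

theorem binetWeight_denom_pos (hk : 2 ≤ k) (hα : 0 < α)
    (hroot : α ^ k = ∑ i ∈ range k, α ^ i) : 0 < 2 + ((k : ℝ) + 1) * (α - 2) := by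
  linarith [three_halves_le_root hk hα hroot, three_mul_sub_one_mul_two_sub_le hk hα hroot]

theorem half_le_binetWeight (hk : 2 ≤ k) (hα : 0 < α) (hroot : α ^ k = ∑ i ∈ range k, α ^ i) :
    1 / 2 ≤ binetWeight k α := by
  have hkβ : 0 ≤ ((k : ℝ) - 1) * (2 - α) := by
    have hk' : (2 : ℝ) ≤ k := by exact_mod_cast hk
    exact mul_nonneg (by linarith) (by linarith [root_lt_two hα hroot])
  rw [binetWeight, le_div_iff₀ (binetWeight_denom_pos hk hα hroot)]
  linarith

theorem binetWeight_le_three_quarters (hk : 2 ≤ k) (hα : 0 < α)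
    (hroot : α ^ k = ∑ i ∈ range k, α ^ i) : binetWeight k α ≤ 3 / 4 := by
  rw [binetWeight, div_le_iff₀ (binetWeight_denom_pos hk hα hroot)]
  linarith [three_mul_sub_one_mul_two_sub_le hk hα hroot]

/-- The coefficient of `α ^ (n - 1)` in the Binet-type formula for the `k`-generalized Lucas
numbers. -/
noncomputable def lucasCoeff (k : ℕ) (α : ℝ) : ℝ := (2 * α - 1) * binetWeight k α

theorem lucasCoeff_mul_denom (hk : 2 ≤ k) (hα : 0 < α)
    (hroot : α ^ k = ∑ i ∈ range k, α ^ i) :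
    lucasCoeff k α * (2 + ((k : ℝ) + 1) * (α - 2)) = (2 * α - 1) * (α - 1) := by
  rw [lucasCoeff, binetWeight, mul_assoc,
    div_mul_cancel₀ _ (binetWeight_denom_pos hk hα hroot).ne']

theorem one_le_lucasCoeff (hk : 2 ≤ k) (hα : 0 < α) (hroot : α ^ k = ∑ i ∈ range k, α ^ i) :
    1 ≤ lucasCoeff k α := by
  have hα' := three_halves_le_root hk hα hroot
  calc (1 : ℝ) = 2 * (1 / 2) := by norm_num
    _ ≤ (2 * α - 1) * binetWeight k α := by
      gcongr
      · linarith
      · linarith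
      · exact half_le_binetWeight hk hα hroot

theorem lucasCoeff_le_nine_quarters (hk : 2 ≤ k) (hα : 0 < α)
    (hroot : α ^ k = ∑ i ∈ range k, α ^ i) : lucasCoeff k α ≤ 9 / 4 := by
  calc (2 * α - 1) * binetWeight k α ≤ 3 * (3 / 4) := by
        gcongr
        · linarith [half_le_binetWeight hk hα hroot]
        · linarith [root_lt_two hα hroot]
        · exact binetWeight_le_three_quarters hk hα hroot
    _ = 9 / 4 := by norm_num

end DominantRoot

section Lucas

variable {k : ℕ}

theorem genLucas_of_lt {m : ℕ} (hm : m < k - 2) : genLucas k m = 0 := by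
  rw [genLucas, dif_pos hm]

theorem genLucas_sub_two (k : ℕ) : genLucas k (k - 2) = 2 := by
  rw [genLucas, dif_neg (lt_irrefl _), dif_pos rfl]

theorem genLucas_sub_one (hk : 2 ≤ k) : genLucas k (k - 1) = 1 := by
  rw [genLucas, dif_neg (by omega), dif_neg (by omega), dif_pos rfl]

theorem isSolution_kBonacci_genLucas (hk : 2 ≤ k) : (kBonacci ℤ k).IsSolution (genLucas k) := by
  refine isSolution_kBonacci_iff.2 fun m ↦ ?_
  rw [genLucas, dif_neg (by omega), dif_neg (by omega), dif_neg (by omega), ← sum_range_reflect]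
  refine sum_congr rfl fun i hi ↦ congrArg (genLucas k) ?_
  have := mem_range.1 hi
  omega

theorem isSolution_kBonacci_genLucas_cast (R : Type*) [CommRing R] (hk : 2 ≤ k) :
    (kBonacci R k).IsSolution (fun m ↦ (genLucas k m : R)) := by
  have hrec := isSolution_kBonacci_iff.1 (isSolution_kBonacci_genLucas hk)
  exact isSolution_kBonacci_iff.2 fun m ↦ by rw [hrec, Int.cast_sum]

theorem sum_range_mul_genLucas {R : Type*} [CommRing R] (hk : 2 ≤ k) (w : ℕ → R) :
    ∑ i ∈ range k, w i * (genLucas k i : R) = 2 * w (k - 2) + w (k - 1) := by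
  obtain ⟨j, rfl⟩ := Nat.exists_eq_add_of_le' hk
  have hzero : ∑ i ∈ range j, w i * (genLucas (j + 2) i : R) = 0 :=
    sum_eq_zero fun i hi ↦ by
      rw [genLucas_of_lt (by simpa using hi), Int.cast_zero, mul_zero]
  have htwo : genLucas (j + 2) j = 2 := genLucas_sub_two (j + 2)
  have hone : genLucas (j + 2) (j + 1) = 1 := genLucas_sub_one hk
  rw [sum_range_succ, sum_range_succ, hzero, htwo, hone]
  simp only [Nat.add_sub_cancel, Nat.add_succ_sub_one]
  push_cast
  ring

theorem genLucas_self (hk : 2 ≤ k) : genLucas k k = 3 := by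
  have hrec := isSolution_kBonacci_iff.1 (isSolution_kBonacci_genLucas hk) 0
  have hsum := sum_range_mul_genLucas (R := ℤ) hk 1
  simp only [zero_add, Pi.one_apply, one_mul, Int.cast_id] at hrec hsum
  rw [hrec, hsum]
  norm_num

/-- The error of the Binet approximation of `genLucas k m`, that is of `L_n` with
`n = m - (k - 2)`. The factor `2 - α = α ^ (-k)` turns `α ^ (m + 1)` into `α ^ (n - 1)` without
negative exponents. -/
noncomputable def lucasError (k : ℕ) (α : ℝ) (m : ℕ) : ℝ :=
  genLucas k m - lucasCoeff k α * ((2 - α) * α ^ (m + 1))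

variable {α : ℝ}

theorem isSolution_kBonacci_lucasError (hk : 2 ≤ k) (hroot : α ^ k = ∑ i ∈ range k, α ^ i) :
    (kBonacci ℝ k).IsSolution (lucasError k α) := by
  have heq : lucasError k α
      = (fun m ↦ (genLucas k m : ℝ)) - (lucasCoeff k α * (2 - α) * α) • (α ^ ·) := by
    ext m
    simp only [lucasError, Pi.sub_apply, Pi.smul_apply, smul_eq_mul]
    ring
  rw [heq, LinearRecurrence.is_sol_iff_mem_solSpace]
  exact sub_mem (isSolution_kBonacci_genLucas_cast ℝ hk)
    (Submodule.smul_mem _ _ (isSolution_kBonacci_pow hroot))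

theorem lucasError_self_eq_sum (hk : 2 ≤ k) (hα : 0 < α)
    (hroot : α ^ k = ∑ i ∈ range k, α ^ i) :
    lucasError k α k = ∑ i ∈ range k, α⁻¹ ^ (i + 1) * lucasError k α i := by
  have hpow := two_sub_mul_pow_eq_one hroot
  have hinv : α⁻¹ ^ k = 2 - α := by rw [inv_pow, ← eq_inv_of_mul_eq_one_left hpow]
  have hinv' : α⁻¹ ^ (k - 1) = α * (2 - α) := by
    rw [← hinv, ← Nat.sub_add_cancel (one_le_two.trans hk), pow_succ', Nat.add_sub_cancel,
      mul_inv_cancel_left₀ (by positivity)]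
  have hgeom : ∑ i ∈ range k, α⁻¹ ^ (i + 1) * (lucasCoeff k α * ((2 - α) * α ^ (i + 1)))
      = k * (lucasCoeff k α * (2 - α)) := by
    rw [← nsmul_eq_mul, ← card_range k, ← sum_const, card_range]
    refine sum_congr rfl fun i _ ↦ ?_
    rw [inv_pow]
    field_simp
  have hlucas : ∑ i ∈ range k, α⁻¹ ^ (i + 1) * (genLucas k i : ℝ)
      = 2 * (α * (2 - α)) + (2 - α) := by
    rw [sum_range_mul_genLucas hk fun i ↦ α⁻¹ ^ (i + 1), ← hinv', ← hinv]
    congr 3 <;> omega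
  simp only [lucasError, mul_sub, sum_sub_distrib, hgeom, hlucas, genLucas_self hk]
  push_cast
  linear_combination (-lucasCoeff k α * α) * hpow - lucasCoeff_mul_denom hk hα hroot

theorem abs_lucasError_le_of_lt (hk : 2 ≤ k) (hα : 0 < α)
    (hroot : α ^ k = ∑ i ∈ range k, α ^ i) {m : ℕ} (hm : m < k) :
    |lucasError k α m| ≤ 3 / 2 := by
  have hpow := two_sub_mul_pow_eq_one hroot
  have hα' := three_halves_le_root hk hα hroot
  have hα2 := root_lt_two hα hroot
  have hc1 := one_le_lucasCoeff hk hα hroot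
  have hc2 := lucasCoeff_le_nine_quarters hk hα hroot
  have : 0 < 2 - α := sub_pos.2 hα2
  obtain hm | hm | hm : m + 2 < k ∨ k - 2 = m ∨ k - 1 = m := by omega
  · have hmain := two_sub_mul_pow_succ_le hα hroot hm
    rw [lucasError, genLucas_of_lt (by omega), Int.cast_zero, zero_sub, abs_neg,
      abs_of_nonneg (by positivity)]
    calc lucasCoeff k α * ((2 - α) * α ^ (m + 1)) ≤ 9 / 4 * (4 / 9) := by gcongr
      _ ≤ 3 / 2 := by norm_num
  · have hmain : (2 - α) * α ^ (m + 1) = α⁻¹ := by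
      refine eq_inv_of_mul_eq_one_left ?_
      rw [mul_assoc, ← pow_succ, ← hpow]
      congr 2
      omega
    have hlower : 1 / 2 ≤ lucasCoeff k α * α⁻¹ := by
      rw [← div_eq_mul_inv, le_div_iff₀ (by positivity)]
      linarith
    have hupper : lucasCoeff k α * α⁻¹ ≤ 3 / 2 := by
      rw [← div_eq_mul_inv, div_le_iff₀ (by positivity)]
      linarith
    rw [lucasError, hmain, ← hm, genLucas_sub_two, Int.cast_ofNat, abs_le]
    constructor <;> linarith
  · have hmain : (2 - α) * α ^ (m + 1) = 1 := by
      rw [← hpow, ← hm, Nat.sub_add_cancel (one_le_two.trans hk)]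
    rw [lucasError, hmain, ← hm, genLucas_sub_one hk, Int.cast_one, mul_one, abs_le]
    constructor <;> linarith

theorem abs_lucasError_le (hk : 2 ≤ k) (hα : 0 < α) (hroot : α ^ k = ∑ i ∈ range k, α ^ i)
    (m : ℕ) : |lucasError k α m| ≤ 3 / 2 := by
  have hsol : (averaging k α).IsSolution (lucasError k α) :=
    isSolution_averaging hα.ne' (two_sub_mul_pow_eq_one hroot)
      (add_succ_eq_two_mul_sub_of_isSolution_kBonacci (isSolution_kBonacci_lucasError hk hroot))
      (lucasError_self_eq_sum hk hα hroot)
  have hweights : ∑ i, ‖(averaging k α).coeffs i‖ ≤ 1 := by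
    rw [← sum_inv_pow_succ_eq_one hα.ne' hroot, sum_range]
    exact sum_le_sum fun i _ ↦ (Real.norm_of_nonneg (by simp only [averaging]; positivity)).le
  exact norm_le_of_isSolution hweights hsol (by norm_num)
    (fun _ ↦ abs_lucasError_le_of_lt hk hα hroot) m

theorem abs_lucasL_sub_le (hk : 2 ≤ k) (hα : 0 < α) (hroot : α ^ k = ∑ i ∈ range k, α ^ i)
    {n : ℕ} (hn : 1 ≤ n) :
    |(lucasL k n : ℝ) - lucasCoeff k α * α ^ (n - 1)| ≤ 3 / 2 := by
  have hmain : (2 - α) * α ^ (n + k - 2 + 1) = α ^ (n - 1) := by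
    rw [show n + k - 2 + 1 = k + (n - 1) by omega, pow_add, ← mul_assoc,
      two_sub_mul_pow_eq_one hroot, one_mul]
  simpa only [lucasL, lucasError, hmain] using abs_lucasError_le hk hα hroot (n + k - 2)

end Lucas

section RepeatedDigits

theorem pow_mul_div_add_div_pow_sub {K : Type*} [Field K] {g : K} (hg : g ≠ 0) (a b : K)
    {d1 d2 : ℕ} (hd : d2 ≤ d1) :
    g ^ d1 * (a / (g - 1) + (b - a) / g ^ (d1 - d2))
      = a * ((g ^ d1 - 1) / (g - 1)) + (b - a) * g ^ d2 + a / (g - 1) := by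
  rw [← pow_sub_mul_pow g hd]
  field_simp
  ring

theorem cast_pow_sub_one_div_sub_one {K : Type*} [Field K] [CharZero K] {g : ℤ} (hg : g ≠ 1)
    (d : ℕ) : (((g ^ d - 1) / (g - 1) : ℤ) : K) = ((g : K) ^ d - 1) / (g - 1) := by
  rw [Int.cast_div (sub_one_dvd_pow_sub_one g d)
    (by exact_mod_cast sub_ne_zero.2 hg)]
  push_cast
  rfl

end RepeatedDigits

theorem abs_inv_mul_sub_one_le {K : Type*} [Field K] [LinearOrder K] [IsStrictOrderedRing K]
    {c P L δ ε η : K} (hc : 1 ≤ c) (hP : 0 < P) (hL : |L - c * P| ≤ ε) (hδ : |δ| ≤ η) :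
    |(c * P)⁻¹ * (L + δ) - 1| ≤ (ε + η) / P := by
  have hcP : 0 < c * P := by positivity
  have hsplit : (c * P)⁻¹ * (L + δ) - 1 = (L - c * P + δ) / (c * P) := by
    field_simp
    ring
  have hε : 0 ≤ ε + η := add_nonneg ((abs_nonneg _).trans hL) ((abs_nonneg _).trans hδ)
  rw [hsplit, abs_div, abs_of_pos hcP]
  gcongr
  · exact (abs_add_le _ _).trans (add_le_add hL hδ)
  · exact le_mul_of_one_le_left hP.le hc

theorem lambda2_bound_general {k n : ℕ} (hk : 2 ≤ k) (hn : 1 ≤ n) {g : ℤ} (hg : 2 ≤ g)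
    {d1 d2 : ℕ} (hd : d2 ≤ d1) {a b : ℤ} (ha : |a| ≤ g - 1)
    (heq : lucasL k n = a * ((g ^ d1 - 1) / (g - 1)) + (b - a) * g ^ d2)
    {α : ℝ} (hα : 0 < α) (hroot : α ^ k = ∑ i ∈ range k, α ^ i) :
    |(α ^ (n - 1))⁻¹ * (g : ℝ) ^ d1 * ((α - 1) / (2 + ((k : ℝ) + 1) * (α - 2)))⁻¹
        * (2 * α - 1)⁻¹ * ((a : ℝ) / (g - 1) + ((b : ℝ) - a) / (g : ℝ) ^ (d1 - d2)) - 1|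
      ≤ 5 / (2 * α ^ (n - 1)) := by
  have hg' : (0 : ℝ) < g - 1 := sub_pos.2 (by exact_mod_cast hg)
  have hdigit : |(a : ℝ) / (g - 1)| ≤ 1 := by
    rw [abs_div, abs_of_pos hg', div_le_one hg']
    exact_mod_cast ha
  have hblocks : (g : ℝ) ^ d1 * ((a : ℝ) / (g - 1) + ((b : ℝ) - a) / (g : ℝ) ^ (d1 - d2))
      = lucasL k n + a / (g - 1) := by
    rw [pow_mul_div_add_div_pow_sub (by linarith) _ _ hd, heq]
    push_cast [cast_pow_sub_one_div_sub_one (K := ℝ) (show g ≠ 1 by omega)]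
    rfl
  calc _ = |(lucasCoeff k α * α ^ (n - 1))⁻¹ * (lucasL k n + a / (g - 1)) - 1| := by
        rw [← hblocks, lucasCoeff, binetWeight, mul_inv, mul_inv]
        ring_nf
    _ ≤ (3 / 2 + 1) / α ^ (n - 1) :=
        abs_inv_mul_sub_one_le (one_le_lucasCoeff hk hα hroot) (by positivity)
          (abs_lucasL_sub_le hk hα hroot hn) hdigit
    _ = 5 / (2 * α ^ (n - 1)) := by field_simp; norm_num

/-- The bound `|α^{-(n-1)} 10^{d1} f_k(α)^{-1} (2α-1)^{-1} ((a/9) + (b-a)10^{d2-d1}) - 1|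
≤ 5/(2 α^{n-1})` on the linear form `Λ₂`. -/
theorem lambda2_bound (k n : ℕ) (hk : 2 ≤ k) (hnk : k + 1 ≤ n) (hn : 5 < n)
    (d1 d2 : ℕ) (a b : ℤ) (hd : d2 < d1) (hd1 : 3 ≤ d1)
    (ha1 : 1 ≤ a) (ha9 : a ≤ 9) (hb0 : 0 ≤ b) (hb9 : b ≤ 9)
    (heq : lucasL k n = a * ((10 ^ d1 - 1) / 9) + (b - a) * 10 ^ d2)
    (α : ℝ) (hα : 1 < α) (hroot : α ^ k = ∑ i ∈ Finset.range k, α ^ i) :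
    |(α ^ (n - 1))⁻¹ * 10 ^ d1 * ((α - 1) / (2 + ((k : ℝ) + 1) * (α - 2)))⁻¹
        * (2 * α - 1)⁻¹ * ((a : ℝ) / 9 + ((b : ℝ) - (a : ℝ)) / 10 ^ (d1 - d2)) - 1|
      ≤ 5 / (2 * α ^ (n - 1)) := by
  simpa only [Int.cast_ofNat, show (10 - 1 : ℝ) = 9 by norm_num] using
    lambda2_bound_general (g := 10) hk (by omega) (by norm_num) hd.le
      (abs_le.2 ⟨by linarith, by linarith⟩) heq (by linarith) hroot
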